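/- There exists an absolute constant C_E > 0 with the following property. Let n ≥ 1 be an integer, t₀ ∈ ℝ, and let a, M : [t₀,∞) → ℝ be continuously differentiable with a(t) > 0, ȧ(t) > 0, M(t) > 0 and Ṁ(t) ≤ 0 for all t. Let g : [t₀,∞) × ℝⁿ → ℝ be continuous with, on every compact time interval, spatial support in a fixed compact set, and let u be a twice continuously differentiable solution of u_tt − a(t)^{−2} Δu + M(t)² u = g with the same support property. Then for every t > t₀: ‖u‖_{X(t)} ≤ C_E ( ‖u_t(t₀,·)‖_{L²(ℝⁿ)} + a(t₀)^{−1} ‖∇u(t₀,·)‖_{L²(ℝⁿ)} + M(t₀) ‖u(t₀,·)‖_{L²(ℝⁿ)} + ∫_{t₀}^{t} ‖g(τ,·)‖_{L²(ℝⁿ)} dτ ). -/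

import Mathlib

open MeasureTheory

noncomputable section

/-- The flat Laplace operator `Δf = Σᵢ ∂²f/∂xᵢ²` on `ℝⁿ`. -/
def lap {n : ℕ} (f : EuclideanSpace ℝ (Fin n) → ℝ)
    (x : EuclideanSpace ℝ (Fin n)) : ℝ :=
  ∑ i : Fin n,
    fderiv ℝ (fun y => fderiv ℝ f y (EuclideanSpace.single i 1)) x
      (EuclideanSpace.single i 1)

/-- The `X(T)`-norm of `u` over the time interval `[t₀, T]`:
`sup ‖∂ₜu‖ + sup ‖a⁻¹∇u‖ + sup ‖M u‖ + (∬ ȧ a⁻³ |∇u|²)^{1/2}`. -/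
def Xnorm {n : ℕ} (t₀ T : ℝ) (a M : ℝ → ℝ)
    (u : ℝ → EuclideanSpace ℝ (Fin n) → ℝ) : ℝ :=
  (⨆ τ : Set.Icc t₀ T,
      Real.sqrt (∫ x, (deriv (fun r => u r x) (τ : ℝ)) ^ 2))
  + (⨆ τ : Set.Icc t₀ T,
      (a (τ : ℝ))⁻¹ * Real.sqrt (∫ x, ‖fderiv ℝ (fun y => u (τ : ℝ) y) x‖ ^ 2))
  + (⨆ τ : Set.Icc t₀ T,
      M (τ : ℝ) * Real.sqrt (∫ x, (u (τ : ℝ) x) ^ 2))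
  + Real.sqrt (∫ τ in t₀..T, ∫ x,
      deriv a τ * ((a τ) ^ 3)⁻¹ * ‖fderiv ℝ (fun y => u τ y) x‖ ^ 2)

/-!
Let `E(t) = ‖∂ₜu‖² + a⁻² ‖∇u‖² + M² ‖u‖²` be the energy, with norms in `L²`. Testing the equation
against `∂ₜu` and applying Green's identity gives
`E' = 2 ∫ ∂ₜu g - 2 ȧ a⁻³ ‖∇u‖² + 2 M Ṁ ‖u‖²`, whose last term is nonpositive. Hence
`H(t) = E(t) + 2 ∫_{t₀}^t ȧ a⁻³ ‖∇u‖²` satisfies `H' ≤ 2 √H ‖g‖`, that is `(√H)' ≤ ‖g‖`. The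
resulting bound `√H(t) ≤ √E(t₀) + ∫_{t₀}^t ‖g‖` controls each of the four terms of the `X`-norm,
so the constant `4` works.
-/

open Set Function InnerProductSpace
open scoped Gradient Laplacian

lemma sqrt_le_sqrt_add_integral_of_hasDerivAt_le {a b : ℝ} (hab : a ≤ b) {f f' γ : ℝ → ℝ}
    (hf : ContinuousOn f (Icc a b)) (hf0 : ∀ t ∈ Icc a b, 0 ≤ f t)
    (hderiv : ∀ t ∈ Ioo a b, HasDerivAt f (f' t) t)
    (hγ : IntegrableOn γ (Icc a b)) (hγ0 : ∀ t ∈ Ioo a b, 0 ≤ γ t)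
    (hle : ∀ t ∈ Ioo a b, f' t ≤ 2 * (√(f t) * γ t)) :
    √(f b) ≤ √(f a) + ∫ t in a..b, γ t := by
  -- The square root is not differentiable at `0`, so compare `√(f + ε²)` and let `ε → 0`.
  refine le_of_forall_pos_le_add fun ε hε => ?_
  have hpos : ∀ t ∈ Icc a b, 0 < f t + ε ^ 2 := fun t ht => by have := hf0 t ht; positivity
  have hgrowth : √(f b + ε ^ 2) - √(f a + ε ^ 2) ≤ ∫ t in a..b, γ t := by
    refine intervalIntegral.sub_le_integral_of_hasDeriv_right_of_le hab
      (hf.add continuousOn_const).sqrt (fun t ht =>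
        (((hderiv t ht).add_const _).sqrt
          (hpos t (Ioo_subset_Icc_self ht)).ne').hasDerivWithinAt) hγ fun t ht => ?_
    have hsqrt := Real.sqrt_pos.2 (hpos t (Ioo_subset_Icc_self ht))
    rw [div_le_iff₀ (by positivity)]
    have hmono : √(f t) ≤ √(f t + ε ^ 2) := Real.sqrt_le_sqrt (by linarith [sq_nonneg ε])
    linarith [hle t ht, mul_le_mul_of_nonneg_right hmono (hγ0 t ht)]
  have hstart : √(f a + ε ^ 2) ≤ √(f a) + ε :=
    Real.sqrt_le_iff.2 ⟨by positivity, by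
      nlinarith [Real.sq_sqrt (hf0 a (left_mem_Icc.2 hab)), mul_nonneg (f a).sqrt_nonneg hε.le]⟩
  have hend : √(f b) ≤ √(f b + ε ^ 2) := Real.sqrt_le_sqrt (by linarith [sq_nonneg ε])
  linarith

lemma integral_inner_le_sqrt_mul_sqrt {α F : Type*} [NormedAddCommGroup F] [InnerProductSpace ℝ F]
    [MeasurableSpace α] {μ : Measure α} {f g : α → F} (hf : MemLp f 2 μ) (hg : MemLp g 2 μ) :
    ∫ x, ⟪f x, g x⟫_ℝ ∂μ ≤ √(∫ x, ‖f x‖ ^ 2 ∂μ) * √(∫ x, ‖g x‖ ^ 2 ∂μ) :=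
  calc ∫ x, ⟪f x, g x⟫_ℝ ∂μ ≤ ∫ x, ‖f x‖ * ‖g x‖ ∂μ :=
        (Real.le_norm_self _).trans <| norm_integral_le_of_norm_le
          (hf.norm.integrable_mul hg.norm) (.of_forall fun x => norm_inner_le_norm (f x) (g x))
    _ ≤ √(∫ x, ‖f x‖ ^ 2 ∂μ) * √(∫ x, ‖g x‖ ^ 2 ∂μ) := by
        simpa [Real.sqrt_eq_rpow] using integral_mul_norm_le_Lp_mul_Lq
          Real.HolderConjugate.two_two (by simpa using hf) (by simpa using hg)

/-- The partial derivative `∂ₜu` of a time-dependent function `u`, given as a time-dependent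
function again so that it can be iterated. -/
def timeDeriv {X F : Type*} [NormedAddCommGroup F] [NormedSpace ℝ F] (u : ℝ → X → F)
    (t : ℝ) (x : X) : F :=
  deriv (fun s => u s x) t

section TimeDerivative

variable {E F : Type*} [NormedAddCommGroup E] [NormedSpace ℝ E] [NormedAddCommGroup F]
  [NormedSpace ℝ F] {u : ℝ → E → F}

lemma hasDerivAt_timeDeriv (hu : Differentiable ℝ (uncurry u)) (t : ℝ) (x : E) :
    HasDerivAt (fun s => u s x) (timeDeriv u t x) t :=
  ((hu.comp (differentiable_id.prodMk (differentiable_const x))) t).hasDerivAt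

lemma timeDeriv_eq_fderiv_uncurry (hu : Differentiable ℝ (uncurry u)) (t : ℝ) (x : E) :
    timeDeriv u t x = fderiv ℝ (uncurry u) (t, x) (1, 0) :=
  ((hu (t, x)).hasFDerivAt.comp_hasDerivAt (f := fun s => (s, x)) t
    ((hasDerivAt_id t).prodMk (hasDerivAt_const t x))).deriv

lemma fderiv_eq_fderiv_uncurry_comp_inr (hu : Differentiable ℝ (uncurry u)) (t : ℝ) (x : E) :
    fderiv ℝ (u t) x = (fderiv ℝ (uncurry u) (t, x)).comp (.inr ℝ ℝ E) :=
  ((hu (t, x)).hasFDerivAt.comp (f := fun y => (t, y)) x (hasFDerivAt_prodMk_right t x)).fderiv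

lemma contDiff_timeDeriv {n : WithTop ℕ∞} (hu : ContDiff ℝ (n + 1) (uncurry u)) :
    ContDiff ℝ n (uncurry (timeDeriv u)) := by
  have hd := hu.differentiable (by simp)
  have : uncurry (timeDeriv u) = fun p => fderiv ℝ (uncurry u) p (1, 0) :=
    funext fun p => timeDeriv_eq_fderiv_uncurry hd p.1 p.2
  rw [this]
  exact (hu.fderiv_right le_rfl).clm_apply contDiff_const

lemma support_timeDeriv_subset (hu : Differentiable ℝ (uncurry u)) {s : Set ℝ}
    (hs : UniqueDiffOn ℝ s) {K : Set E} (hK : ∀ t ∈ s, support (u t) ⊆ K) {t : ℝ} (ht : t ∈ s) :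
    support (timeDeriv u t) ⊆ K := by
  simp only [support_subset_iff'] at hK ⊢
  intro x hx
  rw [← (hs t ht).eq_deriv _ (hasDerivAt_timeDeriv hu t x).hasDerivWithinAt
    ((hasDerivWithinAt_const t s 0).congr (fun r hr => hK r hr x hx) (hK t ht x hx))]

lemma hasDerivAt_fderiv_timeDeriv (hu : ContDiff ℝ 2 (uncurry u)) (t : ℝ) (x : E) :
    HasDerivAt (fun s => fderiv ℝ (u s) x) (fderiv ℝ (timeDeriv u t) x) t := by
  have hd : Differentiable ℝ (uncurry u) := hu.differentiable two_ne_zero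
  have hDu : HasFDerivAt (fderiv ℝ (uncurry u)) (fderiv ℝ (fderiv ℝ (uncurry u)) (t, x)) (t, x) :=
    ((hu.fderiv_right (m := 1) le_rfl).differentiable one_ne_zero (t, x)).hasFDerivAt
  have htime := (hDu.comp_hasDerivAt (f := fun s => (s, x)) t
    ((hasDerivAt_id t).prodMk (hasDerivAt_const t x))).clm_comp
      (hasDerivAt_const t (ContinuousLinearMap.inr ℝ ℝ E))
  have hspace := (hDu.comp (f := fun y => (t, y)) x (hasFDerivAt_prodMk_right t x)).clm_apply
    (hasFDerivAt_const ((1 : ℝ), (0 : E)) x)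
  simp only [fderiv_eq_fderiv_uncurry_comp_inr hd, funext (timeDeriv_eq_fderiv_uncurry hd t)]
  refine htime.congr_deriv ?_
  rw [show fderiv ℝ (fun y => fderiv ℝ (uncurry u) (t, y) (1, 0)) x = _ from hspace.fderiv]
  ext v
  simpa using (hu.contDiffAt (x := (t, x))).isSymmSndFDerivAt (by simp) (1, 0) (0, v)

end TimeDerivative

section Gradient

variable {E : Type*} [NormedAddCommGroup E] [InnerProductSpace ℝ E]

section Complete

variable [CompleteSpace E]

lemma norm_gradient (f : E → ℝ) (x : E) : ‖∇ f x‖ = ‖fderiv ℝ f x‖ :=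
  (toDual ℝ E).symm.norm_map _

lemma contDiff_uncurry_gradient {n : WithTop ℕ∞} {u : ℝ → E → ℝ}
    (hu : ContDiff ℝ (n + 1) (uncurry u)) : ContDiff ℝ n (uncurry fun t => ∇ (u t)) := by
  have : ContDiff ℝ (n + 1) (uncurry fun (p : ℝ × E) (y : E) => u p.1 y) :=
    hu.comp (contDiff_fst.fst.prodMk contDiff_snd)
  exact (toDual ℝ E).symm.toContinuousLinearEquiv.contDiff.comp (this.fderiv_succ contDiff_snd)

lemma timeDeriv_gradient {u : ℝ → E → ℝ} (hu : ContDiff ℝ 2 (uncurry u)) (t : ℝ) (x : E) :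
    timeDeriv (fun s => ∇ (u s)) t x = ∇ (timeDeriv u t) x :=
  ((toDual ℝ E).symm.toContinuousLinearEquiv.hasFDerivAt.comp_hasDerivAt t
    (hasDerivAt_fderiv_timeDeriv hu t x)).deriv

lemma support_gradient_subset (f : E → ℝ) : support (∇ f) ⊆ tsupport f := fun x hx =>
  support_fderiv_subset ℝ fun h => hx (by simp [gradient, h])

end Complete

variable [FiniteDimensional ℝ E]

lemma support_laplacian_subset (f : E → ℝ) : support (Δ f) ⊆ tsupport f := fun x hx => by
  contrapose! hx
  have := (laplacian_congr_nhds (notMem_tsupport_iff_eventuallyEq.1 hx)).eq_of_nhds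
  simpa [laplacian_eq_iteratedFDeriv_stdOrthonormalBasis] using this

lemma laplacian_eq_sum_fderiv_fderiv {ι : Type*} [Fintype ι] (b : OrthonormalBasis ι ℝ E)
    {f : E → ℝ} (hf : ContDiff ℝ 2 f) (x : E) :
    Δ f x = ∑ i, fderiv ℝ (fun y => fderiv ℝ f y (b i)) x (b i) := by
  have hd : DifferentiableAt ℝ (fderiv ℝ f) x :=
    (hf.fderiv_right (m := 1) le_rfl).differentiable one_ne_zero x
  simp [laplacian_eq_iteratedFDeriv_orthonormalBasis f b, iteratedFDeriv_two_apply,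
    fderiv_clm_apply hd]

lemma continuous_laplacian {f : E → ℝ} (hf : ContDiff ℝ 2 f) : Continuous (Δ f) := by
  simp only [funext (laplacian_eq_sum_fderiv_fderiv (stdOrthonormalBasis ℝ E) hf)]
  have hDf : ∀ v, ContDiff ℝ 1 fun x => fderiv ℝ f x v := fun v =>
    (hf.fderiv_right le_rfl).clm_apply contDiff_const
  exact continuous_finsetSum _ fun i _ =>
    ((hDf _).continuous_fderiv one_ne_zero).clm_apply continuous_const

lemma integral_inner_gradient_gradient [MeasurableSpace E] [BorelSpace E] {μ : Measure E}
    [μ.IsAddHaarMeasure] {f h : E → ℝ} (hf : ContDiff ℝ 2 f) (hh : ContDiff ℝ 1 h)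
    (hsupp : HasCompactSupport h) :
    ∫ x, ⟪∇ f x, ∇ h x⟫_ℝ ∂μ = -∫ x, h x * Δ f x ∂μ := by
  set b := stdOrthonormalBasis ℝ E
  have hDf : ∀ v, ContDiff ℝ 1 fun x => fderiv ℝ f x v := fun v =>
    (hf.fderiv_right le_rfl).clm_apply contDiff_const
  have hDDf : ∀ v, Continuous fun x => fderiv ℝ (fun y => fderiv ℝ f y v) x v := fun v =>
    ((hDf v).continuous_fderiv one_ne_zero).clm_apply continuous_const
  have hDh : ∀ v, Continuous fun x => fderiv ℝ h x v := fun v =>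
    (hh.continuous_fderiv one_ne_zero).clm_apply continuous_const
  have hint_Df_Dh : ∀ v, Integrable (fun x => fderiv ℝ f x v * fderiv ℝ h x v) μ := fun v =>
    ((hDf v).continuous.mul (hDh v)).integrable_of_hasCompactSupport
      (hsupp.fderiv_apply ℝ v).mul_left
  have hint_DDf_h : ∀ v, Integrable (fun x => fderiv ℝ (fun y => fderiv ℝ f y v) x v * h x) μ :=
    fun v => ((hDDf v).mul hh.continuous).integrable_of_hasCompactSupport hsupp.mul_left
  have hint_Df_h : ∀ v, Integrable (fun x => fderiv ℝ f x v * h x) μ :=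
    fun v => ((hDf v).continuous.mul hh.continuous).integrable_of_hasCompactSupport hsupp.mul_left
  calc ∫ x, ⟪∇ f x, ∇ h x⟫_ℝ ∂μ = ∑ i, ∫ x, fderiv ℝ f x (b i) * fderiv ℝ h x (b i) ∂μ := by
        rw [← integral_finsetSum _ fun i _ => hint_Df_Dh (b i)]
        congr with x
        rw [← b.sum_inner_mul_inner]
        simp [inner_gradient_left, inner_gradient_right]
    _ = ∑ i, -∫ x, fderiv ℝ (fun y => fderiv ℝ f y (b i)) x (b i) * h x ∂μ :=
        Finset.sum_congr rfl fun i _ => integral_mul_fderiv_eq_neg_fderiv_mul_of_integrable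
          (hint_DDf_h _) (hint_Df_Dh _) (hint_Df_h _)
          (fun x _ => (hDf _).differentiable one_ne_zero x)
          (fun x _ => hh.differentiable one_ne_zero x)
    _ = -∫ x, h x * Δ f x ∂μ := by
        rw [Finset.sum_neg_distrib, ← integral_finsetSum _ fun i _ => hint_DDf_h (b i)]
        simp only [laplacian_eq_sum_fderiv_fderiv b hf, Finset.sum_mul, mul_comm (h _)]

end Gradient

lemma continuousOn_integral_norm_sq {X Y F : Type*} [TopologicalSpace X] [TopologicalSpace Y]
    [MeasurableSpace Y] [OpensMeasurableSpace Y] {μ : Measure Y} [IsFiniteMeasureOnCompacts μ]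
    [NormedAddCommGroup F] {s : Set X} {K : Set Y} {w : X → Y → F} (hw : Continuous (uncurry w))
    (hK : IsCompact K) (hsupp : ∀ t ∈ s, support (w t) ⊆ K) :
    ContinuousOn (fun t => ∫ y, ‖w t y‖ ^ 2 ∂μ) s :=
  continuousOn_integral_of_compact_support hK (hw.norm.pow 2).continuousOn fun t y ht hy => by
    simp [support_subset_iff'.1 (hsupp t ht) y hy]

section CompactSupport

variable {E F : Type*} [NormedAddCommGroup E] [NormedSpace ℝ E] [MeasurableSpace E] [BorelSpace E]
  {μ : Measure E} [IsFiniteMeasureOnCompacts μ] [NormedAddCommGroup F] {K : Set E} {w : ℝ → E → F}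

lemma hasDerivAt_integral_of_support_subset [NormedSpace ℝ F] {a b : ℝ}
    (hw : ContDiff ℝ 1 (uncurry w)) (hK : IsCompact K)
    (hsupp : ∀ t ∈ Icc a b, support (w t) ⊆ K) {t : ℝ} (ht : t ∈ Ioo a b) :
    HasDerivAt (fun s => ∫ x, w s x ∂μ) (∫ x, timeDeriv w t x ∂μ) t := by
  have hdiff : Differentiable ℝ (uncurry w) := hw.differentiable one_ne_zero
  have hcont : Continuous (uncurry (timeDeriv w)) := (contDiff_timeDeriv (n := 0) hw).continuous
  have hsupp' : ∀ s ∈ Icc a b, support (timeDeriv w s) ⊆ K := fun s hs =>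
    support_timeDeriv_subset hdiff (uniqueDiffOn_Icc (ht.1.trans ht.2)) hsupp hs
  obtain ⟨C, hC⟩ := (isCompact_Icc.prod hK).exists_bound_of_continuousOn
    (s := Icc a b ×ˢ K) hcont.continuousOn
  have hint : ∀ s ∈ Icc a b, Integrable (w s) μ := fun s hs =>
    (hw.continuous.uncurry_left s).integrable_of_hasCompactSupport
      (.of_support_subset_isCompact hK (hsupp s hs))
  have hint' : Integrable (timeDeriv w t) μ :=
    (hcont.uncurry_left t).integrable_of_hasCompactSupport
      (.of_support_subset_isCompact hK (hsupp' t (Ioo_subset_Icc_self ht)))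
  have hbound : ∀ s ∈ Ioo a b, ∀ x, ‖timeDeriv w s x‖ ≤ K.indicator (fun _ => C) x := by
    intro s hs x
    by_cases hx : x ∈ K
    · simpa [hx] using hC (s, x) ⟨Ioo_subset_Icc_self hs, hx⟩
    · simp [hx, support_subset_iff'.1 (hsupp' s (Ioo_subset_Icc_self hs)) x hx]
  have hnhds : Ioo a b ∈ nhds t := Ioo_mem_nhds ht.1 ht.2
  exact (hasDerivAt_integral_of_dominated_loc_of_deriv_le (F := w) (F' := timeDeriv w)
    (bound := K.indicator fun _ => C) hnhds
    (Filter.mem_of_superset hnhds fun s hs =>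
      (hint s (Ioo_subset_Icc_self hs)).aestronglyMeasurable)
    (hint t (Ioo_subset_Icc_self ht)) hint'.aestronglyMeasurable
    (.of_forall fun x s hs => hbound s hs x)
    ((integrable_indicator_iff hK.measurableSet).2 (integrableOn_const hK.measure_ne_top))
    (.of_forall fun x s _ => hasDerivAt_timeDeriv hdiff s x)).2

lemma hasDerivAt_integral_norm_sq [InnerProductSpace ℝ F] {a b : ℝ}
    (hw : ContDiff ℝ 1 (uncurry w)) (hK : IsCompact K)
    (hsupp : ∀ t ∈ Icc a b, support (w t) ⊆ K) {t : ℝ} (ht : t ∈ Ioo a b) :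
    HasDerivAt (fun s => ∫ x, ‖w s x‖ ^ 2 ∂μ) (2 * ∫ x, ⟪w t x, timeDeriv w t x⟫_ℝ ∂μ) t := by
  have htime : timeDeriv (fun s x => ‖w s x‖ ^ 2) t = fun x => 2 * ⟪w t x, timeDeriv w t x⟫_ℝ :=
    funext fun x => (hasDerivAt_timeDeriv (hw.differentiable one_ne_zero) t x).norm_sq.deriv
  rw [← integral_const_mul, ← htime]
  refine hasDerivAt_integral_of_support_subset (hw.norm_sq ℝ) hK (fun s hs x hx => ?_) ht
  exact hsupp s hs fun h => hx (by simp [h])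

end CompactSupport

lemma hasDerivAt_integral_of_continuousOn_Icc {F : Type*} [NormedAddCommGroup F] [NormedSpace ℝ F]
    [CompleteSpace F] {a b : ℝ} {f : ℝ → F} (hf : ContinuousOn f (Icc a b)) {t : ℝ}
    (ht : t ∈ Ioo a b) : HasDerivAt (fun s => ∫ τ in a..s, f τ) (f t) t :=
  intervalIntegral.integral_hasDerivAt_right
    ((hf.mono (Icc_subset_Icc_right ht.2.le)).intervalIntegrable_of_Icc ht.1.le)
    ((hf.mono Ioo_subset_Icc_self).stronglyMeasurableAtFilter isOpen_Ioo t ht)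
    (hf.continuousAt (Icc_mem_nhds ht.1 ht.2))

/-- `IsKleinGordonSolution a M g u t₀ T K` states that `u` is a classical solution of
`∂ₜ²u - a⁻² Δu + M² u = g` on the time interval `[t₀, T]` whose spatial support stays in the
compact set `K`. The function `u` is `C²` on all of `ℝ × E`, so that no one-sided time derivatives
occur. -/
structure IsKleinGordonSolution {E : Type*} [NormedAddCommGroup E] [InnerProductSpace ℝ E]
    [FiniteDimensional ℝ E] (a M : ℝ → ℝ) (g u : ℝ → E → ℝ) (t₀ T : ℝ) (K : Set E) : Prop where
  isCompact : IsCompact K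
  contDiff : ContDiff ℝ 2 (uncurry u)
  support_subset : ∀ t ∈ Icc t₀ T, support (u t) ⊆ K
  eqn : ∀ t ∈ Icc t₀ T, ∀ x,
    timeDeriv (timeDeriv u) t x - (a t ^ 2)⁻¹ * Δ (u t) x + M t ^ 2 * u t x = g t x

section Energy

variable {E : Type*} [NormedAddCommGroup E] [InnerProductSpace ℝ E] [CompleteSpace E]
  [MeasurableSpace E] {μ : Measure E} {a M : ℝ → ℝ} {u : ℝ → E → ℝ} {t : ℝ}

/-- The energy `‖∂ₜu‖² + ‖a⁻¹ ∇u‖² + ‖M u‖²` of `u` at time `t`, with norms in `L²(μ)`. -/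
def kleinGordonEnergy (μ : Measure E) (a M : ℝ → ℝ) (u : ℝ → E → ℝ) (t : ℝ) : ℝ :=
  (∫ x, ‖timeDeriv u t x‖ ^ 2 ∂μ) + (a t ^ 2)⁻¹ * (∫ x, ‖∇ (u t) x‖ ^ 2 ∂μ)
    + M t ^ 2 * ∫ x, ‖u t x‖ ^ 2 ∂μ

/-- The spatial integral `∫ ȧ a⁻³ |∇u|²` at time `t`: half the rate at which the expansion of the
background, encoded in the growth of `a`, dissipates the energy. -/
def expansionDissipation (μ : Measure E) (a : ℝ → ℝ) (u : ℝ → E → ℝ) (t : ℝ) : ℝ :=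
  deriv a t * (a t ^ 3)⁻¹ * ∫ x, ‖∇ (u t) x‖ ^ 2 ∂μ

lemma expansionDissipation_nonneg (ha : 0 ≤ a t) (ha' : 0 ≤ deriv a t) :
    0 ≤ expansionDissipation μ a u t := by
  unfold expansionDissipation
  positivity

lemma integral_expansionDissipation_nonneg {t₀ T : ℝ} (hT : t₀ ≤ T)
    (ha0 : ∀ t ∈ Icc t₀ T, 0 ≤ a t) (ha' : ∀ t ∈ Icc t₀ T, 0 ≤ deriv a t) :
    0 ≤ ∫ τ in t₀..T, expansionDissipation μ a u τ :=
  intervalIntegral.integral_nonneg hT fun t ht => expansionDissipation_nonneg (ha0 t ht) (ha' t ht)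

lemma kleinGordonEnergy_eq :
    kleinGordonEnergy μ a M u t = √(∫ x, ‖timeDeriv u t x‖ ^ 2 ∂μ) ^ 2
      + ((a t)⁻¹ * √(∫ x, ‖∇ (u t) x‖ ^ 2 ∂μ)) ^ 2 + (M t * √(∫ x, ‖u t x‖ ^ 2 ∂μ)) ^ 2 := by
  simp (discharger := positivity) only [kleinGordonEnergy, mul_pow, inv_pow, Real.sq_sqrt]

lemma kleinGordonEnergy_nonneg : 0 ≤ kleinGordonEnergy μ a M u t := by
  rw [kleinGordonEnergy_eq]
  positivity

lemma sqrt_integral_timeDeriv_le :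
    √(∫ x, ‖timeDeriv u t x‖ ^ 2 ∂μ) ≤ √(kleinGordonEnergy μ a M u t) := by
  refine Real.le_sqrt_of_sq_le ?_
  rw [kleinGordonEnergy_eq, add_assoc]
  exact le_add_of_nonneg_right (by positivity)

lemma inv_mul_sqrt_integral_gradient_le :
    (a t)⁻¹ * √(∫ x, ‖∇ (u t) x‖ ^ 2 ∂μ) ≤ √(kleinGordonEnergy μ a M u t) := by
  refine Real.le_sqrt_of_sq_le ?_
  rw [kleinGordonEnergy_eq, add_right_comm]
  exact le_add_of_nonneg_left (by positivity)

lemma mul_sqrt_integral_le :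
    M t * √(∫ x, ‖u t x‖ ^ 2 ∂μ) ≤ √(kleinGordonEnergy μ a M u t) := by
  refine Real.le_sqrt_of_sq_le ?_
  rw [kleinGordonEnergy_eq]
  exact le_add_of_nonneg_left (by positivity)

lemma sqrt_kleinGordonEnergy_le_add (ha : 0 ≤ a t) (hM : 0 ≤ M t) :
    √(kleinGordonEnergy μ a M u t) ≤ √(∫ x, ‖timeDeriv u t x‖ ^ 2 ∂μ)
      + (a t)⁻¹ * √(∫ x, ‖∇ (u t) x‖ ^ 2 ∂μ) + M t * √(∫ x, ‖u t x‖ ^ 2 ∂μ) := by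
  have hkin : 0 ≤ √(∫ x, ‖timeDeriv u t x‖ ^ 2 ∂μ) := Real.sqrt_nonneg _
  have hgrad : 0 ≤ (a t)⁻¹ * √(∫ x, ‖∇ (u t) x‖ ^ 2 ∂μ) := by positivity
  have hmass : 0 ≤ M t * √(∫ x, ‖u t x‖ ^ 2 ∂μ) := by positivity
  rw [kleinGordonEnergy_eq]
  refine Real.sqrt_le_iff.2 ⟨by positivity, ?_⟩
  nlinarith [mul_nonneg hkin hgrad, mul_nonneg hkin hmass, mul_nonneg hgrad hmass]

end Energy

namespace IsKleinGordonSolution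

variable {E : Type*} [NormedAddCommGroup E] [InnerProductSpace ℝ E] [FiniteDimensional ℝ E]
  {a M : ℝ → ℝ} {g u : ℝ → E → ℝ} {t₀ T t : ℝ} {K : Set E}

lemma mono {T' : ℝ} (h : IsKleinGordonSolution a M g u t₀ T K) (hT : T' ≤ T) :
    IsKleinGordonSolution a M g u t₀ T' K where
  isCompact := h.isCompact
  contDiff := h.contDiff
  support_subset t ht := h.support_subset t (Icc_subset_Icc_right hT ht)
  eqn t ht := h.eqn t (Icc_subset_Icc_right hT ht)

lemma contDiff_slice (h : IsKleinGordonSolution a M g u t₀ T K) (t : ℝ) : ContDiff ℝ 2 (u t) :=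
  h.contDiff.comp (contDiff_prodMk_right t)

lemma contDiff_timeDeriv (h : IsKleinGordonSolution a M g u t₀ T K) :
    ContDiff ℝ 1 (uncurry (timeDeriv u)) :=
  _root_.contDiff_timeDeriv h.contDiff

lemma contDiff_gradient (h : IsKleinGordonSolution a M g u t₀ T K) :
    ContDiff ℝ 1 (uncurry fun t => ∇ (u t)) :=
  contDiff_uncurry_gradient h.contDiff

lemma continuous_timeDeriv_timeDeriv (h : IsKleinGordonSolution a M g u t₀ T K) :
    Continuous (uncurry (timeDeriv (timeDeriv u))) :=
  (_root_.contDiff_timeDeriv (n := 0) h.contDiff_timeDeriv).continuous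

lemma tsupport_subset (h : IsKleinGordonSolution a M g u t₀ T K) (ht : t ∈ Icc t₀ T) :
    tsupport (u t) ⊆ K :=
  closure_minimal (h.support_subset t ht) h.isCompact.isClosed

lemma support_gradient_subset (h : IsKleinGordonSolution a M g u t₀ T K) (ht : t ∈ Icc t₀ T) :
    support (∇ (u t)) ⊆ K :=
  (_root_.support_gradient_subset _).trans (h.tsupport_subset ht)

lemma support_timeDeriv_subset (h : IsKleinGordonSolution a M g u t₀ T K) (hT : t₀ < T)
    (ht : t ∈ Icc t₀ T) : support (timeDeriv u t) ⊆ K :=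
  _root_.support_timeDeriv_subset (h.contDiff.differentiable two_ne_zero)
    (uniqueDiffOn_Icc hT) h.support_subset ht

lemma support_source_subset (h : IsKleinGordonSolution a M g u t₀ T K) (hT : t₀ < T)
    (ht : t ∈ Icc t₀ T) : support (g t) ⊆ K := by
  refine support_subset_iff'.2 fun x hx => ?_
  have htt : timeDeriv (timeDeriv u) t x = 0 := support_subset_iff'.1
    (_root_.support_timeDeriv_subset (h.contDiff_timeDeriv.differentiable one_ne_zero)
      (uniqueDiffOn_Icc hT) (fun s hs => h.support_timeDeriv_subset hT hs) ht) x hx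
  have hlap : Δ (u t) x = 0 := support_subset_iff'.1
    ((support_laplacian_subset _).trans (h.tsupport_subset ht)) x hx
  simp [← h.eqn t ht x, htt, hlap, support_subset_iff'.1 (h.support_subset t ht) x hx]

variable [MeasurableSpace E] [BorelSpace E] {μ : Measure E}

section EnergyIdentity

variable [μ.IsAddHaarMeasure]

lemma integral_inner_timeDeriv_source (h : IsKleinGordonSolution a M g u t₀ T K) (hT : t₀ < T)
    (ht : t ∈ Icc t₀ T) :
    ∫ x, ⟪timeDeriv u t x, g t x⟫_ℝ ∂μ =
      (∫ x, ⟪timeDeriv u t x, timeDeriv (timeDeriv u) t x⟫_ℝ ∂μ)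
        + (a t ^ 2)⁻¹ * (∫ x, ⟪∇ (u t) x, ∇ (timeDeriv u t) x⟫_ℝ ∂μ)
        + M t ^ 2 * ∫ x, ⟪u t x, timeDeriv u t x⟫_ℝ ∂μ := by
  have hut : ContDiff ℝ 1 (timeDeriv u t) := h.contDiff_timeDeriv.comp (contDiff_prodMk_right t)
  have hsupp : HasCompactSupport (timeDeriv u t) :=
    .of_support_subset_isCompact h.isCompact (h.support_timeDeriv_subset hT ht)
  have hint : ∀ f : E → ℝ, Continuous f → Integrable (fun x => timeDeriv u t x * f x) μ :=
    fun f hf => (hut.continuous.mul hf).integrable_of_hasCompactSupport hsupp.mul_right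
  have htt := hint _ (h.continuous_timeDeriv_timeDeriv.uncurry_left t)
  have hΔ := (hint _ (continuous_laplacian (h.contDiff_slice t))).const_mul (a t ^ 2)⁻¹
  have hmass := (hint _ (h.contDiff_slice t).continuous).const_mul (M t ^ 2)
  rw [integral_inner_gradient_gradient (h.contDiff_slice t) hut hsupp, mul_neg, ← sub_eq_add_neg,
    ← integral_const_mul, ← integral_const_mul]
  simp only [RCLike.inner_apply', conj_trivial, mul_comm (u t _)]
  rw [← integral_sub htt hΔ, ← integral_add (f := fun x => _ - _) (htt.sub hΔ) hmass]
  congr with x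
  rw [← h.eqn t ht x]
  ring

lemma hasDerivAt_kleinGordonEnergy (h : IsKleinGordonSolution a M g u t₀ T K)
    (ht : t ∈ Ioo t₀ T) (ha : DifferentiableAt ℝ a t) (ha0 : a t ≠ 0)
    (hM : DifferentiableAt ℝ M t) :
    HasDerivAt (kleinGordonEnergy μ a M u)
      (2 * (∫ x, ⟪timeDeriv u t x, g t x⟫_ℝ ∂μ) - 2 * expansionDissipation μ a u t
        + 2 * (M t * deriv M t) * ∫ x, ‖u t x‖ ^ 2 ∂μ) t := by
  have hT : t₀ < T := ht.1.trans ht.2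
  have hkin := hasDerivAt_integral_norm_sq (μ := μ) h.contDiff_timeDeriv h.isCompact
    (fun s hs => h.support_timeDeriv_subset hT hs) ht
  have hgrad := hasDerivAt_integral_norm_sq (μ := μ) h.contDiff_gradient h.isCompact
    (fun s hs => h.support_gradient_subset hs) ht
  have hmass := hasDerivAt_integral_norm_sq (μ := μ) (h.contDiff.of_le one_le_two) h.isCompact
    h.support_subset ht
  have hweight : HasDerivAt (fun s => (a s ^ 2)⁻¹) (-(2 * deriv a t * (a t ^ 3)⁻¹)) t :=
    ((ha.hasDerivAt.pow 2).inv (pow_ne_zero 2 ha0)).congr_deriv (by simp; field_simp)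
  refine ((hkin.add (hweight.mul hgrad)).add ((hM.hasDerivAt.pow 2).mul hmass)).congr_deriv ?_
  rw [h.integral_inner_timeDeriv_source hT (Ioo_subset_Icc_self ht), expansionDissipation]
  simp only [timeDeriv_gradient h.contDiff, Pi.pow_apply]
  push_cast
  ring

end EnergyIdentity

section EnergyEstimate

lemma continuousOn_expansionDissipation [IsFiniteMeasureOnCompacts μ]
    (h : IsKleinGordonSolution a M g u t₀ T K) (ha : ContDiff ℝ 1 a)
    (ha0 : ∀ t ∈ Icc t₀ T, a t ≠ 0) :
    ContinuousOn (expansionDissipation μ a u) (Icc t₀ T) :=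
  ((ha.continuous_deriv le_rfl).continuousOn.mul
    ((ha.continuous.pow 3).continuousOn.inv₀ fun t ht => pow_ne_zero 3 (ha0 t ht))).mul
    (continuousOn_integral_norm_sq h.contDiff_gradient.continuous h.isCompact
      fun _ ht => h.support_gradient_subset ht)

lemma continuousOn_kleinGordonEnergy [IsFiniteMeasureOnCompacts μ]
    (h : IsKleinGordonSolution a M g u t₀ T K) (hT : t₀ < T) (ha : ContinuousOn a (Icc t₀ T))
    (ha0 : ∀ t ∈ Icc t₀ T, a t ≠ 0) (hM : ContinuousOn M (Icc t₀ T)) :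
    ContinuousOn (kleinGordonEnergy μ a M u) (Icc t₀ T) :=
  ((continuousOn_integral_norm_sq h.contDiff_timeDeriv.continuous h.isCompact
      fun _ ht => h.support_timeDeriv_subset hT ht).add
    (((ha.pow 2).inv₀ fun t ht => pow_ne_zero 2 (ha0 t ht)).mul
      (continuousOn_integral_norm_sq h.contDiff_gradient.continuous h.isCompact
        fun _ ht => h.support_gradient_subset ht))).add
    ((hM.pow 2).mul (continuousOn_integral_norm_sq h.contDiff.continuous h.isCompact
      h.support_subset))

lemma continuousOn_sqrt_integral_source [IsFiniteMeasureOnCompacts μ]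
    (h : IsKleinGordonSolution a M g u t₀ T K) (hT : t₀ < T) (hg : Continuous (uncurry g)) :
    ContinuousOn (fun t => √(∫ x, ‖g t x‖ ^ 2 ∂μ)) (Icc t₀ T) :=
  (continuousOn_integral_norm_sq hg h.isCompact fun _ ht => h.support_source_subset hT ht).sqrt

variable [μ.IsAddHaarMeasure]

lemma integral_inner_timeDeriv_source_le (h : IsKleinGordonSolution a M g u t₀ T K) (hT : t₀ < T)
    (hg : Continuous (g t)) (ht : t ∈ Icc t₀ T) :
    ∫ x, ⟪timeDeriv u t x, g t x⟫_ℝ ∂μ ≤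
      √(kleinGordonEnergy μ a M u t) * √(∫ x, ‖g t x‖ ^ 2 ∂μ) :=
  (integral_inner_le_sqrt_mul_sqrt
    ((h.contDiff_timeDeriv.continuous.uncurry_left t).memLp_of_hasCompactSupport
      (.of_support_subset_isCompact h.isCompact (h.support_timeDeriv_subset hT ht)))
    (hg.memLp_of_hasCompactSupport
      (.of_support_subset_isCompact h.isCompact (h.support_source_subset hT ht)))).trans <|
  mul_le_mul_of_nonneg_right sqrt_integral_timeDeriv_le (Real.sqrt_nonneg _)

theorem sqrt_kleinGordonEnergy_add_le (h : IsKleinGordonSolution a M g u t₀ T K) (hT : t₀ < T)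
    (ha : ContDiff ℝ 1 a) (ha0 : ∀ t ∈ Icc t₀ T, 0 < a t) (ha' : ∀ t ∈ Icc t₀ T, 0 ≤ deriv a t)
    (hM : Differentiable ℝ M) (hM' : ∀ t ∈ Icc t₀ T, M t * deriv M t ≤ 0)
    (hg : Continuous (uncurry g)) :
    √(kleinGordonEnergy μ a M u T + 2 * ∫ τ in t₀..T, expansionDissipation μ a u τ) ≤
      √(kleinGordonEnergy μ a M u t₀) + ∫ τ in t₀..T, √(∫ x, ‖g τ x‖ ^ 2 ∂μ) := by
  have hne : ∀ t ∈ Icc t₀ T, a t ≠ 0 := fun t ht => (ha0 t ht).ne'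
  set D := fun t => ∫ τ in t₀..t, expansionDissipation μ a u τ with hD
  have hD0 : ∀ t ∈ Icc t₀ T, 0 ≤ D t := fun t ht =>
    integral_expansionDissipation_nonneg ht.1 (fun s hs => (ha0 s ⟨hs.1, hs.2.trans ht.2⟩).le)
      fun s hs => ha' s ⟨hs.1, hs.2.trans ht.2⟩
  have hdiss := h.continuousOn_expansionDissipation (μ := μ) ha hne
  have hDcont : ContinuousOn D (Icc t₀ T) := by
    simpa only [uIcc_of_le hT.le] using intervalIntegral.continuousOn_primitive_interval'
      (hdiss.intervalIntegrable_of_Icc hT.le) left_mem_uIcc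
  have hDderiv : ∀ t ∈ Ioo t₀ T, HasDerivAt D (expansionDissipation μ a u t) t := fun t ht =>
    hasDerivAt_integral_of_continuousOn_Icc hdiss ht
  have hHcont : ContinuousOn (fun t => kleinGordonEnergy μ a M u t + 2 * D t) (Icc t₀ T) :=
    (h.continuousOn_kleinGordonEnergy hT ha.continuous.continuousOn hne
      hM.continuous.continuousOn).add (continuousOn_const.mul hDcont)
  have hgrowth := sqrt_le_sqrt_add_integral_of_hasDerivAt_le hT.le hHcont
    (fun t ht => add_nonneg kleinGordonEnergy_nonneg (mul_nonneg zero_le_two (hD0 t ht)))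
    (fun t ht => (h.hasDerivAt_kleinGordonEnergy ht (ha.differentiable one_ne_zero t)
      (hne t (Ioo_subset_Icc_self ht)) (hM t)).add ((hDderiv t ht).const_mul 2))
    (h.continuousOn_sqrt_integral_source (μ := μ) hT hg).integrableOn_Icc
    (fun t _ => Real.sqrt_nonneg _) fun t ht => ?_
  · simpa [hD] using hgrowth
  have htT := Ioo_subset_Icc_self ht
  have hwork : ∫ x, ⟪timeDeriv u t x, g t x⟫_ℝ ∂μ ≤
      √(kleinGordonEnergy μ a M u t + 2 * D t) * √(∫ x, ‖g t x‖ ^ 2 ∂μ) :=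
    (h.integral_inner_timeDeriv_source_le hT (hg.uncurry_left t) htT).trans <| by
      gcongr
      linarith [hD0 t htT]
  have hmass : M t * deriv M t * ∫ x, ‖u t x‖ ^ 2 ∂μ ≤ 0 :=
    mul_nonpos_of_nonpos_of_nonneg (hM' t htT) (by positivity)
  linarith

theorem sqrt_kleinGordonEnergy_le (h : IsKleinGordonSolution a M g u t₀ T K) (ht : t ∈ Icc t₀ T)
    (ha : ContDiff ℝ 1 a) (ha0 : ∀ t ∈ Icc t₀ T, 0 < a t) (ha' : ∀ t ∈ Icc t₀ T, 0 ≤ deriv a t)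
    (hM : Differentiable ℝ M) (hM' : ∀ t ∈ Icc t₀ T, M t * deriv M t ≤ 0)
    (hg : Continuous (uncurry g)) :
    √(kleinGordonEnergy μ a M u t) ≤
      √(kleinGordonEnergy μ a M u t₀) + ∫ τ in t₀..t, √(∫ x, ‖g τ x‖ ^ 2 ∂μ) := by
  rcases ht.1.eq_or_lt with rfl | hlt
  · simp
  have hsub : Icc t₀ t ⊆ Icc t₀ T := Icc_subset_Icc_right ht.2
  refine (Real.sqrt_le_sqrt (le_add_of_nonneg_right ?_)).trans
    ((h.mono ht.2).sqrt_kleinGordonEnergy_add_le hlt ha (fun s hs => ha0 s (hsub hs))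
      (fun s hs => ha' s (hsub hs)) hM (fun s hs => hM' s (hsub hs)) hg)
  exact mul_nonneg zero_le_two <| integral_expansionDissipation_nonneg hlt.le
    (fun s hs => (ha0 s (hsub hs)).le) fun s hs => ha' s (hsub hs)

theorem sqrt_integral_expansionDissipation_le (h : IsKleinGordonSolution a M g u t₀ T K)
    (hT : t₀ < T) (ha : ContDiff ℝ 1 a) (ha0 : ∀ t ∈ Icc t₀ T, 0 < a t)
    (ha' : ∀ t ∈ Icc t₀ T, 0 ≤ deriv a t) (hM : Differentiable ℝ M)
    (hM' : ∀ t ∈ Icc t₀ T, M t * deriv M t ≤ 0) (hg : Continuous (uncurry g)) :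
    √(∫ τ in t₀..T, expansionDissipation μ a u τ) ≤
      √(kleinGordonEnergy μ a M u t₀) + ∫ τ in t₀..T, √(∫ x, ‖g τ x‖ ^ 2 ∂μ) := by
  refine (Real.sqrt_le_sqrt ?_).trans (h.sqrt_kleinGordonEnergy_add_le hT ha ha0 ha' hM hM' hg)
  have henergy : 0 ≤ kleinGordonEnergy μ a M u T := kleinGordonEnergy_nonneg
  have hdiss := integral_expansionDissipation_nonneg (μ := μ) (u := u) hT.le
    (fun t ht => (ha0 t ht).le) ha'
  linarith

end EnergyEstimate

end IsKleinGordonSolution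

lemma lap_eq_laplacian {n : ℕ} {f : EuclideanSpace ℝ (Fin n) → ℝ} (hf : ContDiff ℝ 2 f)
    (x : EuclideanSpace ℝ (Fin n)) : lap f x = Δ f x := by
  simp [lap, laplacian_eq_sum_fderiv_fderiv (EuclideanSpace.basisFun (Fin n) ℝ) hf]

lemma Xnorm_eq {n : ℕ} (t₀ T : ℝ) (a M : ℝ → ℝ) (u : ℝ → EuclideanSpace ℝ (Fin n) → ℝ) :
    Xnorm t₀ T a M u = (⨆ τ : Icc t₀ T, √(∫ x, ‖timeDeriv u τ x‖ ^ 2))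
      + (⨆ τ : Icc t₀ T, (a τ)⁻¹ * √(∫ x, ‖∇ (u τ) x‖ ^ 2))
      + (⨆ τ : Icc t₀ T, M τ * √(∫ x, ‖u τ x‖ ^ 2))
      + √(∫ τ in t₀..T, expansionDissipation volume a u τ) := by
  simp only [Xnorm, expansionDissipation, timeDeriv, norm_gradient, integral_const_mul,
    Real.norm_eq_abs, sq_abs]

theorem IsKleinGordonSolution.Xnorm_le {n : ℕ} {t₀ T : ℝ} {a M : ℝ → ℝ}
    {g u : ℝ → EuclideanSpace ℝ (Fin n) → ℝ} {K : Set (EuclideanSpace ℝ (Fin n))}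
    (h : IsKleinGordonSolution a M g u t₀ T K) (hT : t₀ < T) (ha : ContDiff ℝ 1 a)
    (ha0 : ∀ t ∈ Icc t₀ T, 0 < a t) (ha' : ∀ t ∈ Icc t₀ T, 0 ≤ deriv a t)
    (hM : Differentiable ℝ M) (hM' : ∀ t ∈ Icc t₀ T, M t * deriv M t ≤ 0)
    (hg : Continuous (uncurry g)) :
    Xnorm t₀ T a M u ≤
      4 * (√(kleinGordonEnergy volume a M u t₀) + ∫ τ in t₀..T, √(∫ x, ‖g τ x‖ ^ 2)) := by
  set R := √(kleinGordonEnergy volume a M u t₀) + ∫ τ in t₀..T, √(∫ x, ‖g τ x‖ ^ 2)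
  have henergy : ∀ τ : Icc t₀ T, √(kleinGordonEnergy volume a M u τ) ≤ R := fun τ =>
    (h.sqrt_kleinGordonEnergy_le τ.2 ha ha0 ha' hM hM' hg).trans <| add_le_add le_rfl <|
      intervalIntegral.integral_mono_interval le_rfl τ.2.1 τ.2.2
        (.of_forall fun t => Real.sqrt_nonneg _)
        ((h.continuousOn_sqrt_integral_source hT hg).intervalIntegrable_of_Icc hT.le)
  have hdiss := h.sqrt_integral_expansionDissipation_le (μ := volume) hT ha ha0 ha' hM hM' hg
  have : Nonempty (Icc t₀ T) := ⟨t₀, left_mem_Icc.2 hT.le⟩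
  have hkin := ciSup_le fun τ => sqrt_integral_timeDeriv_le.trans (henergy τ)
  have hgrad := ciSup_le fun τ => inv_mul_sqrt_integral_gradient_le.trans (henergy τ)
  have hmass := ciSup_le fun τ => mul_sqrt_integral_le.trans (henergy τ)
  rw [Xnorm_eq]
  linarith

theorem stmt_8_general {n : ℕ} {t₀ T : ℝ} (hT : t₀ < T) {a M : ℝ → ℝ} (ha : ContDiff ℝ 1 a)
    (hM : Differentiable ℝ M) (ha0 : ∀ t ∈ Icc t₀ T, 0 < a t)
    (ha' : ∀ t ∈ Icc t₀ T, 0 ≤ deriv a t) (hM0 : ∀ t ∈ Icc t₀ T, 0 ≤ M t)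
    (hM' : ∀ t ∈ Icc t₀ T, deriv M t ≤ 0) {g u : ℝ → EuclideanSpace ℝ (Fin n) → ℝ}
    (hg : Continuous (uncurry g)) (hu : ContDiff ℝ 2 (uncurry u))
    (hsupp : ∃ K, IsCompact K ∧ ∀ t ∈ Icc t₀ T, ∀ x ∉ K, u t x = 0)
    (heqn : ∀ t ∈ Icc t₀ T, ∀ x, deriv (fun s => deriv (fun r => u r x) s) t
      - (a t ^ 2)⁻¹ * lap (u t) x + M t ^ 2 * u t x = g t x) :
    Xnorm t₀ T a M u ≤ 4 * (√(∫ x, (deriv (fun r => u r x) t₀) ^ 2)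
      + (a t₀)⁻¹ * √(∫ x, ‖fderiv ℝ (u t₀) x‖ ^ 2) + M t₀ * √(∫ x, u t₀ x ^ 2)
      + ∫ τ in t₀..T, √(∫ x, g τ x ^ 2)) := by
  obtain ⟨K, hK, hKu⟩ := hsupp
  have hslice : ∀ t, ContDiff ℝ 2 (u t) := fun t => hu.comp (contDiff_prodMk_right t)
  have hsol : IsKleinGordonSolution a M g u t₀ T K :=
    { isCompact := hK
      contDiff := hu
      support_subset := fun t ht => support_subset_iff'.2 (hKu t ht)
      eqn := fun t ht x => lap_eq_laplacian (hslice t) x ▸ heqn t ht x }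
  have hXnorm := hsol.Xnorm_le hT ha ha0 ha' hM
    (fun t ht => mul_nonpos_of_nonneg_of_nonpos (hM0 t ht) (hM' t ht)) hg
  have ht₀ : t₀ ∈ Icc t₀ T := left_mem_Icc.2 hT.le
  have hdata := sqrt_kleinGordonEnergy_le_add (μ := volume) (u := u) (ha0 t₀ ht₀).le (hM0 t₀ ht₀)
  simp only [timeDeriv, norm_gradient, Real.norm_eq_abs, sq_abs] at hXnorm hdata
  linarith

/-- the `X(t)`-norm energy estimate for the linear Klein-Gordon equation
`u_tt - a(t)⁻² Δu + M(t)² u = g`. -/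
theorem stmt_8 :
    ∃ C_E : ℝ, 0 < C_E ∧
      ∀ (n : ℕ), 1 ≤ n →
      ∀ (t₀ : ℝ) (a M : ℝ → ℝ),
        ContDiff ℝ 1 a → ContDiff ℝ 1 M →
        (∀ t ∈ Set.Ici t₀, 0 < a t) →
        (∀ t ∈ Set.Ici t₀, 0 < deriv a t) →
        (∀ t ∈ Set.Ici t₀, 0 < M t) →
        (∀ t ∈ Set.Ici t₀, deriv M t ≤ 0) →
      ∀ g u : ℝ → EuclideanSpace ℝ (Fin n) → ℝ,
        Continuous (fun p : ℝ × EuclideanSpace ℝ (Fin n) => g p.1 p.2) →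
        (∀ T : ℝ, ∃ K : Set (EuclideanSpace ℝ (Fin n)), IsCompact K ∧
          ∀ t ∈ Set.Icc t₀ T, ∀ x ∉ K, g t x = 0) →
        ContDiff ℝ 2 (fun p : ℝ × EuclideanSpace ℝ (Fin n) => u p.1 p.2) →
        (∀ T : ℝ, ∃ K : Set (EuclideanSpace ℝ (Fin n)), IsCompact K ∧
          ∀ t ∈ Set.Icc t₀ T, ∀ x ∉ K, u t x = 0) →
        (∀ t ∈ Set.Ici t₀, ∀ x,
          deriv (fun s => deriv (fun r => u r x) s) t
            - (a t ^ 2)⁻¹ * lap (fun y => u t y) x + (M t) ^ 2 * u t x = g t x) →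
      ∀ t : ℝ, t₀ < t →
        Xnorm t₀ t a M u
        ≤ C_E *
          (Real.sqrt (∫ x, (deriv (fun r => u r x) t₀) ^ 2)
            + (a t₀)⁻¹ * Real.sqrt (∫ x, ‖fderiv ℝ (fun y => u t₀ y) x‖ ^ 2)
            + M t₀ * Real.sqrt (∫ x, (u t₀ x) ^ 2)
            + ∫ τ in t₀..t, Real.sqrt (∫ x, (g τ x) ^ 2)) :=
  ⟨4, by norm_num, fun n _ t₀ a M ha hM ha0 ha' hM0 hM' g u hg _ hu hsupp heqn T hT =>
    stmt_8_general hT ha (hM.differentiable one_ne_zero) (fun t ht => ha0 t ht.1)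
      (fun t ht => (ha' t ht.1).le) (fun t ht => (hM0 t ht.1).le) (fun t ht => hM' t ht.1)
      hg hu (hsupp T) fun t ht => heqn t ht.1⟩
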